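/- Let n be a positive integer and let d₁, d₂ be divisors of n. Then (1/n)·∑_{k|n} c_k(n/d₁)·c_{d₂}(n/k) equals 1 if d₁ = d₂ and equals 0 otherwise. -/

import Mathlib

/-- The Ramanujan sum `c_d(r)`: the sum of the `r`-th powers of all primitive
`d`-th roots of unity. -/
noncomputable def ramanujanSum (d r : ℕ) : ℂ :=
  ∑ m ∈ (Finset.range d).filter (fun m => Nat.gcd m d = 1),
    Complex.exp (2 * Real.pi * Complex.I * ((m : ℂ) * (r : ℂ) / (d : ℂ)))

/-!
The `k`-th Ramanujan sums over `k ∣ n` exhaust the `n`-th roots of unity, so `∑_{k ∣ n} c_k(r)` is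
`n` if `n ∣ r` and `0` otherwise. Let `S(d₂)` be the sum over `k ∣ n` in the theorem. Summing
`S(e)` over `e ∣ d` and applying this identity twice, first to `∑_{e ∣ d} c_e(n/k)` and then to
`∑_{k ∣ n/d} c_k(n/d₁)`, gives `n` if `d₁ ∣ d` and `0` otherwise. The function `e ↦ n·[d₁ = e]` has
the same divisor sums, so it coincides with `S` by Möbius inversion.
-/

open Polynomial in
theorem sum_pow_nthRootsFinset_one {R : Type*} [CommRing R] [IsDomain R] {ζ : R} {n : ℕ}
    (hζ : IsPrimitiveRoot ζ n) (r : ℕ) :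
    ∑ z ∈ nthRootsFinset n (1 : R), z ^ r = if n ∣ r then (n : R) else 0 := by
  obtain rfl | hn := n.eq_zero_or_pos
  · simp
  have hζ_mem : ζ ∈ nthRootsFinset n (1 : R) := hζ.mem_nthRootsFinset hn
  split_ifs with hr
  · have pow_eq_one : ∀ z ∈ nthRootsFinset n (1 : R), z ^ r = 1 := fun z hz ↦ by
      obtain ⟨m, rfl⟩ := hr
      rw [pow_mul, (mem_nthRootsFinset hn 1).1 hz, one_pow]
    rw [Finset.sum_congr rfl pow_eq_one, Finset.sum_const, hζ.card_nthRootsFinset, nsmul_one]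
  · -- Multiplication by `ζ` permutes the roots of unity, so the sum is fixed by the factor `ζ ^ r`.
    have mul_mapsTo : Set.MapsTo (ζ * ·) (nthRootsFinset n (1 : R) : Set R)
        (nthRootsFinset n (1 : R)) := fun z hz ↦ by
      simpa only [mul_one, Finset.mem_coe] using mul_mem_nthRootsFinset hζ_mem hz
    have mul_injOn : Set.InjOn (ζ * ·) (nthRootsFinset n (1 : R) : Set R) :=
      (mul_right_injective₀ (hζ.ne_zero hn.ne')).injOn
    have sum_fixed : ζ ^ r * ∑ z ∈ nthRootsFinset n (1 : R), z ^ r =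
        ∑ z ∈ nthRootsFinset n (1 : R), z ^ r := by
      simp only [Finset.mul_sum, ← mul_pow]
      exact Finset.sum_nbij (ζ * ·) mul_mapsTo mul_injOn
        (Finset.surjOn_of_injOn_of_card_le _ mul_mapsTo mul_injOn le_rfl) fun _ _ ↦ rfl
    exact (mul_left_eq_self₀.1 sum_fixed).resolve_left fun h ↦ hr ((hζ.pow_eq_one_iff_dvd r).1 h)

theorem sum_divisors_sum_primitiveRoots {R M : Type*} [CommRing R] [IsDomain R] [AddCommMonoid M]
    (n : ℕ) (f : R → M) :
    ∑ k ∈ n.divisors, ∑ z ∈ primitiveRoots k R, f z =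
      ∑ z ∈ Polynomial.nthRootsFinset n (1 : R), f z := by
  classical
  rw [IsPrimitiveRoot.nthRoots_one_eq_biUnion_primitiveRoots,
    Finset.sum_biUnion fun _ _ _ _ hkl ↦ IsPrimitiveRoot.disjoint hkl]

theorem eq_of_forall_dvd_sum_divisors_eq {M : Type*} [AddCommGroup M] {n : ℕ} (hn : n ≠ 0)
    {f g : ℕ → M} (h : ∀ d, d ∣ n → ∑ e ∈ d.divisors, f e = ∑ e ∈ d.divisors, g e) :
    f n = g n := by
  have moebius_inversion {u : ℕ → M}
      (hu : ∀ d, d ∣ n → ∑ e ∈ d.divisors, u e = ∑ e ∈ d.divisors, g e) :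
      ∑ x ∈ n.divisorsAntidiagonal,
        ArithmeticFunction.moebius x.1 • ∑ e ∈ x.2.divisors, g e = u n :=
    (ArithmeticFunction.sum_eq_iff_sum_smul_moebius_eq_on {d | d ∣ n} fun _ _ ↦ dvd_trans).1
      (fun d _ hd ↦ hu d hd) n (Nat.pos_of_ne_zero hn) dvd_rfl
  exact (moebius_inversion h).symm.trans (moebius_inversion fun _ _ ↦ rfl)

theorem filter_divisors_dvd_div {n d : ℕ} (hd : d ∣ n) :
    {k ∈ n.divisors | d ∣ n / k} = (n / d).divisors := by
  obtain rfl | hn := eq_or_ne n 0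
  · simp
  ext k
  have hnd : n / d ≠ 0 := (Nat.div_ne_zero_iff_of_dvd hd).2 ⟨hn, ne_zero_of_dvd_ne_zero hn hd⟩
  rw [Finset.mem_filter, Nat.mem_divisors, Nat.mem_divisors, Nat.dvd_div_iff_mul_dvd hd]
  constructor
  · rintro ⟨⟨hk, -⟩, hdk⟩
    exact ⟨by rwa [Nat.dvd_div_iff_mul_dvd hk, mul_comm] at hdk, hnd⟩
  · rintro ⟨hdk, -⟩
    have hk : k ∣ n := dvd_of_mul_left_dvd hdk
    exact ⟨⟨hk, hn⟩, by rwa [Nat.dvd_div_iff_mul_dvd hk, mul_comm]⟩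

theorem div_dvd_div_left_iff {n a b : ℕ} (hn : n ≠ 0) (ha : a ∣ n) (hb : b ∣ n) :
    n / a ∣ n / b ↔ b ∣ a := by
  obtain ⟨q, rfl⟩ := ha
  obtain ⟨ha₀, hq₀⟩ := mul_ne_zero_iff.1 hn
  rw [Nat.mul_div_cancel_left q (Nat.pos_of_ne_zero ha₀), Nat.dvd_div_iff_mul_dvd hb,
    Nat.mul_dvd_mul_iff_right (Nat.pos_of_ne_zero hq₀)]

theorem ramanujanSum_eq_sum_primitiveRoots (d r : ℕ) :
    ramanujanSum d r = ∑ z ∈ primitiveRoots d ℂ, z ^ r := by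
  obtain rfl | hd := eq_or_ne d 0
  · simp [ramanujanSum]
  have : NeZero d := ⟨hd⟩
  have hζ := Complex.isPrimitiveRoot_exp d hd
  refine Finset.sum_nbij (Complex.exp (2 * Real.pi * Complex.I / d) ^ ·) ?_ ?_ ?_ ?_
  · intro m hm
    exact (mem_primitiveRoots (NeZero.pos d)).2 (hζ.pow_of_coprime m (Finset.mem_filter.1 hm).2)
  · intro a ha b hb
    exact hζ.pow_inj (Finset.mem_range.1 (Finset.mem_filter.1 ha).1)
      (Finset.mem_range.1 (Finset.mem_filter.1 hb).1)
  · intro z hz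
    obtain ⟨m, hm, hmd, rfl⟩ := hζ.isPrimitiveRoot_iff.1 (isPrimitiveRoot_of_mem_primitiveRoots hz)
    exact ⟨m, Finset.mem_filter.2 ⟨Finset.mem_range.2 hm, hmd⟩, rfl⟩
  · intro m _
    rw [← pow_mul, ← Complex.exp_nat_mul]
    push_cast
    ring_nf

theorem sum_divisors_ramanujanSum (n r : ℕ) :
    ∑ k ∈ n.divisors, ramanujanSum k r = if n ∣ r then (n : ℂ) else 0 := by
  obtain rfl | hn := eq_or_ne n 0
  · simp
  simp only [ramanujanSum_eq_sum_primitiveRoots, sum_divisors_sum_primitiveRoots,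
    sum_pow_nthRootsFinset_one (Complex.isPrimitiveRoot_exp n hn)]

theorem sum_divisors_sum_mul_ramanujanSum_div {n d : ℕ} (hd : d ∣ n) (f : ℕ → ℂ) :
    ∑ e ∈ d.divisors, ∑ k ∈ n.divisors, f k * ramanujanSum e (n / k) =
      d * ∑ k ∈ (n / d).divisors, f k := by
  rw [Finset.sum_comm]
  simp only [← Finset.mul_sum, sum_divisors_ramanujanSum, mul_ite, mul_zero]
  rw [← Finset.sum_filter, filter_divisors_dvd_div hd, ← Finset.sum_mul, mul_comm]

theorem sum_divisors_sum_ramanujanSum_mul_ramanujanSum {n d₁ d : ℕ} (hn : n ≠ 0)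
    (h₁ : d₁ ∣ n) (hd : d ∣ n) :
    ∑ e ∈ d.divisors, ∑ k ∈ n.divisors, ramanujanSum k (n / d₁) * ramanujanSum e (n / k) =
      if d₁ ∣ d then (n : ℂ) else 0 := by
  simp only [sum_divisors_sum_mul_ramanujanSum_div hd (ramanujanSum · (n / d₁)),
    sum_divisors_ramanujanSum, div_dvd_div_left_iff hn hd h₁, mul_ite, mul_zero, ← Nat.cast_mul,
    Nat.mul_div_cancel' hd]

theorem stmt_6 (n : ℕ) (hn : 0 < n) (d₁ d₂ : ℕ) (h₁ : d₁ ∣ n) (h₂ : d₂ ∣ n) :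
    (1 / (n : ℂ)) * ∑ k ∈ n.divisors, ramanujanSum k (n / d₁) * ramanujanSum d₂ (n / k) =
      if d₁ = d₂ then 1 else 0 := by
  have hn₀ : n ≠ 0 := hn.ne'
  have hd₂ : d₂ ≠ 0 := ne_zero_of_dvd_ne_zero hn₀ h₂
  have orthogonality :
      ∑ k ∈ n.divisors, ramanujanSum k (n / d₁) * ramanujanSum d₂ (n / k) =
        if d₁ = d₂ then (n : ℂ) else 0 := by
    refine eq_of_forall_dvd_sum_divisors_eq hd₂
      (f := fun e ↦ ∑ k ∈ n.divisors, ramanujanSum k (n / d₁) * ramanujanSum e (n / k))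
      (g := fun e ↦ if d₁ = e then (n : ℂ) else 0) fun d hd ↦ ?_
    have hd₀ : d ≠ 0 := ne_zero_of_dvd_ne_zero hd₂ hd
    simp only [sum_divisors_sum_ramanujanSum_mul_ramanujanSum hn₀ h₁ (hd.trans h₂),
      Finset.sum_ite_eq, Nat.mem_divisors, ne_eq, hd₀, not_false_eq_true, and_true]
  rw [orthogonality, mul_ite, mul_zero, one_div_mul_cancel (Nat.cast_ne_zero.2 hn₀)]
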